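/- Assume K ≥ 1 and N ≥ K+3. The QNL approximation satisfies the patch test away from the outer boundary: at the uniform deformation y^F, ∂E^qnl(y^F)/∂y_j = 0 for every j with |j| ≤ N−2. -/

import Mathlib

/-!
At a uniform deformation every strain `y'_ℓ` equals `F`, so each bond contributes to `∂E/∂y_j` only
through the derivative `φ'(F)` or `φ'(2F)` times the variation of the strain(s) it sees. With
`y'_ℓ + y'_{ℓ+1} = 2F = 2y'_ℓ`, an atomistic next-nearest-neighbour term and its continuum
replacement have the *same* first variation `φ'(2F) (c_ℓ + c_{ℓ+1})`, where `c_ℓ = ∂y'_ℓ/∂y_j`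
(`hasDerivAt_D1_update`). The two sums therefore glue to one over `{-N+1, …, N-1}` with no trace of
the interface. As `c_ℓ` is `1/ε` times the difference of the indicators of `ℓ = j` and `ℓ = j + 1`,
both remaining sums cancel as soon as all the indices involved lie in the summation range, which
is what `|j| ≤ N - 2` ensures (`sum_strainVar`, `sum_strainVar_add`).
-/

open Finset

noncomputable section

/-- lattice spacing ε = 1/N -/
def eps (N : ℕ) : ℝ := 1 / N

/-- backward first difference y'_ℓ = (y_ℓ - y_{ℓ-1})/ε -/
def D1 (N : ℕ) (y : ℤ → ℝ) (ℓ : ℤ) : ℝ := (y ℓ - y (ℓ - 1)) / eps N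

/-- the QNL energy
E^qnl(y) = ε Σ_{ℓ=−N+1}^{N} φ(y'_ℓ) + ε Σ_{ℓ∈A} φ(y'_ℓ + y'_{ℓ+1})
           + ε Σ_{ℓ∈C} (1/2)(φ(2y'_ℓ) + φ(2y'_{ℓ+1})). -/
def Eqnl (N K : ℕ) (φ : ℝ → ℝ) (y : ℤ → ℝ) : ℝ :=
  eps N * ((∑ ℓ ∈ Icc (-(N : ℤ) + 1) (N : ℤ), φ (D1 N y ℓ))
    + (∑ ℓ ∈ Icc (-(K : ℤ)) (K : ℤ), φ (D1 N y ℓ + D1 N y (ℓ + 1)))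
    + ∑ ℓ ∈ Icc (-(N : ℤ) + 1) ((N : ℤ) - 1) \ Icc (-(K : ℤ)) (K : ℤ),
        (φ (2 * D1 N y ℓ) + φ (2 * D1 N y (ℓ + 1))) / 2)

/-- the uniform deformation y^F_j = F j ε -/
def yF (N : ℕ) (F : ℝ) : ℤ → ℝ := fun j => F * (j : ℝ) * eps N

/-- The variation `∂y'_ℓ/∂y_j` of the strain of bond `ℓ` under a displacement of atom `j`:
`1/ε` if `ℓ = j`, `-1/ε` if `ℓ = j + 1`, and zero otherwise. -/
def strainVar (N : ℕ) (j ℓ : ℤ) : ℝ :=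
  ((if ℓ = j then 1 else 0) - (if ℓ = j + 1 then 1 else 0)) / eps N

lemma D1_yF (N : ℕ) (hN : 2 ≤ N) (F : ℝ) (ℓ : ℤ) : D1 N (yF N F) ℓ = F := by
  have h : (N : ℝ) ≠ 0 := by positivity
  simp only [D1, yF, eps]
  push_cast
  field_simp
  ring

lemma hasDerivAt_D1_update (N : ℕ) (y : ℤ → ℝ) (j ℓ : ℤ) (s : ℝ) :
    HasDerivAt (fun s : ℝ => D1 N (Function.update y j s) ℓ) (strainVar N j ℓ) s := by
  have h : ∀ m : ℤ, HasDerivAt (fun s : ℝ => Function.update y j s m)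
      (if m = j then 1 else 0) s := by
    intro m
    by_cases hm : m = j
    · subst hm
      simpa using hasDerivAt_id' s
    · simpa [hm] using hasDerivAt_const s (y m)
  have := ((h ℓ).fun_sub (h (ℓ - 1))).div_const (eps N)
  simpa only [D1, strainVar, sub_eq_iff_eq_add] using this

lemma sum_strainVar (N : ℕ) (j a b : ℤ) (ha : a ≤ j) (hb : j + 1 ≤ b) :
    ∑ ℓ ∈ Icc a b, strainVar N j ℓ = 0 := by
  have h1 : j ∈ Icc a b := by simp; lia
  have h2 : j + 1 ∈ Icc a b := by simp; lia
  simp only [strainVar, ← sum_div, sum_sub_distrib, sum_ite_eq', h1, h2, if_true, sub_self,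
    zero_div]

/-- The indicators of `ℓ = j` cancel inside each summand, so that only the endpoints `j - 1` and
`j + 1` of the two next-nearest-neighbour bonds at atom `j` have to lie in the range. -/
lemma sum_strainVar_add (N : ℕ) (j a b : ℤ) (ha : a ≤ j - 1) (hb : j + 1 ≤ b) :
    ∑ ℓ ∈ Icc a b, (strainVar N j ℓ + strainVar N j (ℓ + 1)) = 0 := by
  have h1 : j - 1 ∈ Icc a b := by simp; lia
  have h2 : j + 1 ∈ Icc a b := by simp; lia
  have h : ∀ ℓ : ℤ, strainVar N j ℓ + strainVar N j (ℓ + 1)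
      = ((if ℓ = j - 1 then 1 else 0) - (if ℓ = j + 1 then 1 else 0)) / eps N := by
    intro ℓ
    have e : (ℓ + 1 = j) = (ℓ = j - 1) := by rw [eq_sub_iff_add_eq]
    simp only [strainVar, add_left_inj, e]
    ring
  simp only [h, ← sum_div, sum_sub_distrib, sum_ite_eq', h1, h2, if_true, sub_self, zero_div]

/-- The QNL approximation satisfies the patch test away from the outer boundary:
at the uniform deformation y^F, ∂E^qnl(y^F)/∂y_j = 0 for every |j| ≤ N−2. -/
theorem stmt17 (N K : ℕ) (hN : 2 ≤ N) (hK : 1 ≤ K) (hKN : K + 3 ≤ N)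
    (φ : ℝ → ℝ) (hφ : Differentiable ℝ φ) (F : ℝ) (hF : 0 < F) :
    ∀ j : ℤ, |j| ≤ (N : ℤ) - 2 →
      deriv (fun s : ℝ => Eqnl N K φ (Function.update (yF N F) j s)) (yF N F j) = 0 := by
  intro j hj
  obtain ⟨hj1, hj2⟩ := abs_le.mp hj
  set s₀ := yF N F j with hs₀
  have hD : ∀ ℓ, HasDerivAt (fun s : ℝ => D1 N (Function.update (yF N F) j s) ℓ)
      (strainVar N j ℓ) s₀ := fun ℓ => hasDerivAt_D1_update N _ j ℓ s₀
  have hF0 : ∀ ℓ, D1 N (Function.update (yF N F) j s₀) ℓ = F := fun ℓ => by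
    rw [hs₀, Function.update_eq_self, D1_yF N hN]
  have hcomp : ∀ (g : ℝ → ℝ) (g' x : ℝ), HasDerivAt g g' s₀ → g s₀ = x →
      HasDerivAt (fun s => φ (g s)) (deriv φ x * g') s₀ := by
    rintro g g' x hg rfl
    exact (hφ (g s₀)).hasDerivAt.comp s₀ hg
  have h1 : ∀ ℓ, HasDerivAt (fun s : ℝ => φ (D1 N (Function.update (yF N F) j s) ℓ))
      (deriv φ F * strainVar N j ℓ) s₀ := fun ℓ => hcomp _ _ _ (hD ℓ) (hF0 ℓ)
  have h2 : ∀ ℓ, HasDerivAt (fun s : ℝ => φ (D1 N (Function.update (yF N F) j s) ℓ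
        + D1 N (Function.update (yF N F) j s) (ℓ + 1)))
      (deriv φ (2 * F) * (strainVar N j ℓ + strainVar N j (ℓ + 1))) s₀ := fun ℓ =>
    hcomp _ _ _ ((hD ℓ).add (hD (ℓ + 1))) (by simp only [hF0]; ring)
  have h2' : ∀ ℓ, HasDerivAt (fun s : ℝ => φ (2 * D1 N (Function.update (yF N F) j s) ℓ))
      (deriv φ (2 * F) * (2 * strainVar N j ℓ)) s₀ := fun ℓ =>
    hcomp _ _ _ ((hD ℓ).const_mul 2) (by simp only [hF0])
  -- The continuum replacement has the same first variation as the atomistic term in `h2`.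
  have h3 : ∀ ℓ, HasDerivAt (fun s : ℝ => (φ (2 * D1 N (Function.update (yF N F) j s) ℓ)
        + φ (2 * D1 N (Function.update (yF N F) j s) (ℓ + 1))) / 2)
      (deriv φ (2 * F) * (strainVar N j ℓ + strainVar N j (ℓ + 1))) s₀ := fun ℓ =>
    (((h2' ℓ).add (h2' (ℓ + 1))).div_const 2).congr_deriv (by ring)
  have hE := (((HasDerivAt.fun_sum
    (fun ℓ (_ : ℓ ∈ Icc (-(N : ℤ) + 1) (N : ℤ)) => h1 ℓ)).add
    (HasDerivAt.fun_sum (fun ℓ (_ : ℓ ∈ Icc (-(K : ℤ)) (K : ℤ)) => h2 ℓ))).add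
    (HasDerivAt.fun_sum (fun ℓ (_ : ℓ ∈ Icc (-(N : ℤ) + 1) ((N : ℤ) - 1) \
      Icc (-(K : ℤ)) (K : ℤ)) => h3 ℓ))).const_mul (eps N)
  have hsub : Icc (-(K : ℤ)) (K : ℤ) ⊆ Icc (-(N : ℤ) + 1) ((N : ℤ) - 1) :=
    Icc_subset_Icc (by lia) (by lia)
  refine HasDerivAt.deriv (HasDerivAt.congr_deriv hE ?_)
  rw [add_assoc, add_comm (∑ ℓ ∈ Icc (-(K : ℤ)) (K : ℤ), _), sum_sdiff hsub, ← mul_sum, ← mul_sum,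
    sum_strainVar N j _ _ (by lia) (by lia), sum_strainVar_add N j _ _ (by lia) (by lia)]
  ring

end
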